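/- arXiv:2012.12623 — 6 statements merged into one kernel-verified Lean document; each statement's English description precedes it below -/
import Mathlib

section
/- For every integer n ≥ 0, the sum Σ_{k=0}^{n} f_n(k) equals (1 + (−1)^n)/2; that is, it equals 1 if n is even and 0 if n is odd. -/
/-- `f_n(k) = (−1)^k · 2^{n−k} · (3n−3k+2) · C_{n−k} · (n+k+1)!·(2n−k+1)! / (k!·(3n−k+2)!)`,
where `C_m` is the `m`-th Catalan number. -/
def fnk (n k : ℕ) : ℚ :=
  (-1)^k * 2^(n-k) * (3*(n:ℚ) - 3*(k:ℚ) + 2) * (catalan (n-k) : ℚ) *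
    (Nat.factorial (n+k+1) : ℚ) * (Nat.factorial (2*n-k+1) : ℚ) /
    ((Nat.factorial k : ℚ) * (Nat.factorial (3*n-k+2) : ℚ))

def FdAux (m d : ℕ) : ℚ :=
  (-1)^d * 2^m * (3*(m:ℚ)+2) * (catalan m : ℚ) * (Nat.factorial (m+2*d+1) : ℚ) *
    (Nat.factorial (2*m+d+1) : ℚ) / ((Nat.factorial d : ℚ) * (Nat.factorial (3*m+2*d+2) : ℚ))

def GdAux (m e : ℕ) : ℚ :=
  -((-1)^e * 2^m * ((m:ℚ)+1) * (catalan m : ℚ) * (2*(m:ℚ)+2*e+1) *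
    (Nat.factorial (m+2*e) : ℚ) * (Nat.factorial (2*m+e) : ℚ)) /
    ((Nat.factorial e : ℚ) * (Nat.factorial (3*m+2*e+1) : ℚ))

lemma catAux (m : ℕ) : ((m:ℚ)+2) * (catalan (m+1) : ℚ) = 2*(2*m+1) * catalan m := by
  have h1 : ((m+1+1 : ℕ):ℚ) * (catalan (m+1) : ℚ) = (Nat.centralBinom (m+1) : ℚ) := by
    exact_mod_cast succ_mul_catalan_eq_centralBinom (m+1)
  have h2 : ((m+1 : ℕ):ℚ) * (catalan m : ℚ) = (Nat.centralBinom m : ℚ) := by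
    exact_mod_cast succ_mul_catalan_eq_centralBinom m
  have h3 : ((m+1 : ℕ):ℚ) * (Nat.centralBinom (m+1) : ℚ)
      = (2*(2*m+1) : ℕ) * (Nat.centralBinom m : ℚ) := by
    exact_mod_cast Nat.succ_mul_centralBinom_succ m
  rw [← h1, ← h2] at h3
  push_cast at h3
  have h : (m:ℚ)+1 ≠ 0 := by positivity
  apply mul_left_cancel₀ h
  linear_combination h3

lemma stepAux (m d : ℕ) :
    FdAux m (d+1) - FdAux m d = GdAux (m+1) d - GdAux m (d+1) := by
  have hc : (catalan (m+1) : ℚ) = 2*(2*m+1) * catalan m / ((m:ℚ)+2) := by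
    rw [← catAux]; field_simp
  unfold FdAux GdAux
  rw [show m+2*(d+1)+1 = m+2*d+1+1+1 by ring, show 2*m+(d+1)+1 = 2*m+d+1+1 by ring,
    show 3*m+2*(d+1)+2 = 3*m+2*d+2+1+1 by ring, show m+1+2*d = m+2*d+1 by ring,
    show 2*(m+1)+d = 2*m+d+1+1 by ring, show 3*(m+1)+2*d+1 = 3*m+2*d+2+1+1 by ring,
    show m+2*(d+1) = m+2*d+1+1 by ring, show 2*m+(d+1) = 2*m+d+1 by ring,
    show 3*m+2*(d+1)+1 = 3*m+2*d+2+1 by ring, hc]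
  simp only [Nat.factorial_succ (m+2*d+1+1), Nat.factorial_succ (m+2*d+1),
    Nat.factorial_succ (2*m+d+1), Nat.factorial_succ d,
    Nat.factorial_succ (3*m+2*d+2+1), Nat.factorial_succ (3*m+2*d+2)]
  have h1 : (Nat.factorial d : ℚ) ≠ 0 := by positivity
  have h2 : (Nat.factorial (3*m+2*d+2) : ℚ) ≠ 0 := by positivity
  push_cast
  generalize (Nat.factorial d : ℚ) = A at *
  generalize (Nat.factorial (3*m+2*d+2) : ℚ) = B at *
  generalize (Nat.factorial (m+2*d+1) : ℚ) = C at *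
  generalize (Nat.factorial (2*m+d+1) : ℚ) = D at *
  generalize (catalan m : ℚ) = E at *
  rw [pow_succ, pow_succ]
  generalize (-1:ℚ)^d = s
  generalize (2:ℚ)^m = t
  have h3 : (d:ℚ)+1 ≠ 0 := by positivity
  have h4 : (3*(m:ℚ)+2*d+2+1) ≠ 0 := by positivity
  have h5 : (3*(m:ℚ)+2*d+2+1+1) ≠ 0 := by positivity
  have h6 : (m:ℚ)+2 ≠ 0 := by positivity
  field_simp
  ring

lemma bdryAux (m : ℕ) : FdAux m 0 = - GdAux m 0 := by
  unfold FdAux GdAux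
  simp only [mul_zero, add_zero, Nat.factorial_succ (3*m+1), Nat.factorial_succ m,
    Nat.factorial_succ (2*m)]
  have h2 : (Nat.factorial (3*m+1) : ℚ) ≠ 0 := by positivity
  push_cast
  have h4 : (3*(m:ℚ)+1+1) ≠ 0 := by positivity
  simp
  field_simp
  ring

lemma g0Aux (n : ℕ) : GdAux 0 (n+1) = (-1)^n := by
  unfold GdAux
  rw [show 3*0+2*(n+1)+1 = 2*(n+1)+1 by ring, Nat.factorial_succ (2*(n+1))]
  simp only [mul_zero, zero_add]
  have h2 : (Nat.factorial (2*(n+1)) : ℚ) ≠ 0 := by positivity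
  have h1 : (Nat.factorial (n+1) : ℚ) ≠ 0 := by positivity
  push_cast
  have h4 : (2*((n:ℚ)+1)+1) ≠ 0 := by positivity
  simp
  field_simp
  ring

lemma partAux (n M : ℕ) (h : M ≤ n+1) :
    ∑ m ∈ Finset.range M, (FdAux m (n+1-m) - FdAux m (n-m)) =
      GdAux M (n+1-M) - (-1)^n := by
  induction M with
  | zero => simp [g0Aux]
  | succ M ih =>
    rw [Finset.sum_range_succ, ih (by omega)]
    obtain ⟨d, rfl⟩ : ∃ d, n = M + d := ⟨n - M, by omega⟩
    rw [show M+d+1-M = d+1 by omega, show M+d-M = d by omega,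
      show M+d+1-(M+1) = d by omega, stepAux]
    ring

lemma sumAux (n : ℕ) :
    ∑ m ∈ Finset.range (n+1), FdAux m (n-m) = (1 + (-1 : ℚ)^n) / 2 := by
  induction n with
  | zero => simp [FdAux]
  | succ n ih =>
    have h := partAux n (n+1) le_rfl
    rw [Finset.sum_sub_distrib, ih] at h
    rw [Finset.sum_range_succ, Nat.sub_self, bdryAux]
    rw [Nat.sub_self] at h
    rw [pow_succ]
    linear_combination h

theorem sum_fnk (n : ℕ) :
    ∑ k ∈ Finset.range (n+1), fnk n k = (1 + (-1 : ℚ)^n) / 2 := by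
  rw [← sumAux, ← Finset.sum_range_reflect]
  apply Finset.sum_congr rfl
  intro m hm
  rw [Finset.mem_range] at hm
  obtain ⟨d, rfl⟩ : ∃ d, n = m + d := ⟨n - m, by omega⟩
  rw [show m+d+1-1-m = d by omega, show m+d-m = d by omega]
  unfold fnk FdAux
  rw [show m+d-d = m by omega, show m+d+d+1 = m+2*d+1 by ring,
    show 2*(m+d)-d+1 = 2*m+d+1 by omega, show 3*(m+d)-d+2 = 3*m+2*d+2 by omega]
  push_cast
  ring
end

section
/- For all integers n ≥ 0 and 0 ≤ k ≤ n, one has f_n(k) − f_{n+1}(k) = h(n,k+1) − h(n,k). -/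
/-- The WZ certificate: for `1 ≤ k ≤ n+1`,
`h(n,k) = (−1)^k·2^{n−k+1}·(n+2−k)(n−k+1)(5n−3k+8)·(2n+2−k)!·(n+1+k)!·(2n+2−2k)!
          / ((k−1)!·((n+2−k)!)²·(3n+5−k)!)`, and `h(n,0) = 0`. -/
def hcert (n k : ℕ) : ℚ :=
  if k = 0 then 0 else
    (-1)^k * 2^(n+1-k) * ((n:ℚ)+2-(k:ℚ)) * ((n:ℚ)-(k:ℚ)+1) * (5*(n:ℚ)-3*(k:ℚ)+8) *
      (Nat.factorial (2*n+2-k) : ℚ) * (Nat.factorial (n+1+k) : ℚ) *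
      (Nat.factorial (2*n+2-2*k) : ℚ) /
      ((Nat.factorial (k-1) : ℚ) * (Nat.factorial (n+2-k) : ℚ)^2 *
        (Nat.factorial (3*n+5-k) : ℚ))

theorem catalan_fact (m : ℕ) :
    (catalan m : ℚ) = (Nat.factorial (2*m) : ℚ) /
      ((Nat.factorial m : ℚ) * (Nat.factorial m : ℚ) * ((m:ℚ)+1)) := by
  have h1 : ((m:ℚ)+1) * (catalan m : ℚ) = (Nat.centralBinom m : ℚ) := by
    exact_mod_cast succ_mul_catalan_eq_centralBinom m
  have h2 : (Nat.centralBinom m : ℚ) * (Nat.factorial m : ℚ) * (Nat.factorial m : ℚ)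
      = (Nat.factorial (2*m) : ℚ) := by
    have h := Nat.choose_mul_factorial_mul_factorial (show m ≤ 2*m by omega)
    rw [show 2*m-m = m by omega] at h
    rw [Nat.centralBinom_eq_two_mul_choose]
    exact_mod_cast h
  have h3 : (Nat.factorial m : ℚ) ≠ 0 := by positivity
  have h4 : (m:ℚ)+1 ≠ 0 := by positivity
  rw [eq_div_iff (by positivity), ← h2, ← h1]
  ring

theorem fnk_add (k m : ℕ) : fnk (k+m) k =
    (-1)^k * 2^m * (3*(m:ℚ)+2) * ((Nat.factorial (2*m) : ℚ) /
      ((Nat.factorial m : ℚ) * (Nat.factorial m : ℚ) * ((m:ℚ)+1))) *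
    (Nat.factorial (2*k+m+1) : ℚ) * (Nat.factorial (2*m+k+1) : ℚ) /
    ((Nat.factorial k : ℚ) * (Nat.factorial (2*k+3*m+2) : ℚ)) := by
  unfold fnk
  rw [show k+m-k = m by omega, show k+m+k+1 = 2*k+m+1 by omega,
    show 2*(k+m)-k+1 = 2*m+k+1 by omega, show 3*(k+m)-k+2 = 2*k+3*m+2 by omega, catalan_fact]
  push_cast
  ring

theorem hcert_succ_add (k m : ℕ) : hcert (k+m) (k+1) =
    (-1)^(k+1) * 2^m * ((m:ℚ)+1) * (m:ℚ) * (2*(k:ℚ)+5*m+5) *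
      (Nat.factorial (2*m+k+1) : ℚ) * (Nat.factorial (2*k+m+2) : ℚ) *
      (Nat.factorial (2*m) : ℚ) /
      ((Nat.factorial k : ℚ) * (Nat.factorial (m+1) : ℚ)^2 *
        (Nat.factorial (2*k+3*m+4) : ℚ)) := by
  unfold hcert
  rw [if_neg (by omega), show k+m+1-(k+1) = m by omega, show 2*(k+m)+2-(k+1) = 2*m+k+1 by omega,
    show k+m+1+(k+1) = 2*k+m+2 by omega, show 2*(k+m)+2-2*(k+1) = 2*m by omega,
    show k+1-1 = k by omega, show k+m+2-(k+1) = m+1 by omega,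
    show 3*(k+m)+5-(k+1) = 2*k+3*m+4 by omega]
  push_cast
  ring

theorem hcert_add (k m : ℕ) : hcert (k+m) k =
    (-1)^k * 2^(m+1) * ((m:ℚ)+2) * ((m:ℚ)+1) * (2*(k:ℚ)+5*m+8) * (k:ℚ) *
      (Nat.factorial (2*m+k+2) : ℚ) * (Nat.factorial (2*k+m+1) : ℚ) *
      (Nat.factorial (2*m+2) : ℚ) /
      ((Nat.factorial k : ℚ) * (Nat.factorial (m+2) : ℚ)^2 *
        (Nat.factorial (2*k+3*m+5) : ℚ)) := by
  rcases k with _ | j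
  · simp [hcert]
  · have h := hcert_succ_add j (m+1)
    rw [show j+(m+1) = j+1+m by omega] at h
    rw [h, show 2*(m+1)+j+1 = 2*m+(j+1)+2 by omega, show 2*j+(m+1)+2 = 2*(j+1)+m+1 by omega,
      show 2*(m+1) = 2*m+2 by omega, show m+1+1 = m+2 by omega,
      show 2*j+3*(m+1)+4 = 2*(j+1)+3*m+5 by omega, Nat.factorial_succ j]
    push_cast
    field_simp
    ring

/-- For all `n ≥ 0` and `0 ≤ k ≤ n`: `f_n(k) − f_{n+1}(k) = h(n,k+1) − h(n,k)`. -/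
theorem fnk_wz (n k : ℕ) (hk : k ≤ n) :
    fnk n k - fnk (n+1) k = hcert n (k+1) - hcert n k := by
  obtain ⟨m, rfl⟩ := Nat.exists_eq_add_of_le hk
  rw [hcert_succ_add, hcert_add, fnk_add, show k+m+1 = k+(m+1) by omega, fnk_add,
    show 2*(m+1) = 2*m+1+1 by omega, show 2*k+(m+1)+1 = 2*k+m+1+1 by omega,
    show 2*m+1+1+k+1 = 2*m+k+1+1+1 by omega,
    show 2*k+3*(m+1)+2 = 2*k+3*m+2+1+1+1 by omega,
    show 2*k+3*m+5 = 2*k+3*m+2+1+1+1 by omega,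
    show 2*k+3*m+4 = 2*k+3*m+2+1+1 by omega,
    show 2*k+m+2 = 2*k+m+1+1 by omega, show 2*m+k+2 = 2*m+k+1+1 by omega,
    show 2*m+2 = 2*m+1+1 by omega, show m+2 = m+1+1 by omega]
  have e1 := Nat.factorial_succ (2*k+3*m+2)
  have e2 := Nat.factorial_succ (2*k+3*m+2+1)
  have e3 := Nat.factorial_succ (2*k+3*m+2+1+1)
  rw [e3, e2, e1, Nat.factorial_succ (2*m+k+1+1), Nat.factorial_succ (2*m+k+1),
    Nat.factorial_succ (2*k+m+1), Nat.factorial_succ (2*m+1), Nat.factorial_succ (2*m),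
    Nat.factorial_succ (m+1), Nat.factorial_succ m]
  have p1 : (Nat.factorial (2*k+3*m+2) : ℚ) ≠ 0 := by positivity
  have p2 : (Nat.factorial k : ℚ) ≠ 0 := by positivity
  have p3 : (Nat.factorial m : ℚ) ≠ 0 := by positivity
  generalize Nat.factorial (2*k+3*m+2) = A at *
  generalize Nat.factorial k = B at *
  generalize Nat.factorial m = C at *
  generalize Nat.factorial (2*m+k+1) = D at *
  generalize Nat.factorial (2*k+m+1) = E at *
  generalize Nat.factorial (2*m) = F at *
  push_cast
  field_simp
  ring
end

section
/- For all integers n ≥ 0 and 0 ≤ i ≤ n, one has Σ_{k=0}^{n} Σ_{j=0}^{n+i−2k} g_{n,i}(k,j) = 2^{n−i}, where the inner sum runs over integers j with 0 ≤ j ≤ n+i−2k and is empty when n+i−2k < 0. -/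
/-- `g_{n,i}(k,j) = 2^{k−n} · f_n(k) · binom(2n+1−i−k, j)` (with `binom(m,j) = 0` for `j > m`). -/
def gnik (n i k j : ℕ) : ℚ :=
  fnk n k / 2^(n-k) * (Nat.choose (2*n+1-i-k) j : ℚ)

/-- reciprocal factorial on the integers -/
def rfz (z : ℤ) : ℚ := if z < 0 then 0 else 1 / (Nat.factorial z.toNat : ℚ)

lemma rfz_neg {z : ℤ} (h : z < 0) : rfz z = 0 := by simp [rfz, h]

lemma rfz_nat (m : ℕ) : rfz (m : ℤ) = 1 / (Nat.factorial m : ℚ) := by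
  simp [rfz]

lemma rfz_pred (z w : ℤ) (h : w + 1 = z) : rfz w = (z : ℚ) * rfz z := by
  subst h
  rcases lt_trichotomy (w + 1) 0 with h | h | h
  · rw [rfz_neg h, rfz_neg (by omega)]; simp
  · rw [rfz_neg (z := w) (by omega), h]; simp
  · obtain ⟨m, rfl⟩ : ∃ m : ℕ, w = m := ⟨w.toNat, by omega⟩
    have : ((m : ℤ) + 1) = ((m + 1 : ℕ) : ℤ) := by push_cast; rfl
    rw [this, rfz_nat, rfz_nat, Nat.factorial_succ]
    have := Nat.factorial_ne_zero m
    push_cast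
    field_simp

lemma choose_rfz (m e : ℕ) :
    (Nat.choose m e : ℚ) = (Nat.factorial m : ℚ) * rfz e * rfz ((m : ℤ) - e) := by
  rcases le_or_gt e m with h | h
  · obtain ⟨d, rfl⟩ := Nat.exists_eq_add_of_le h
    have : (((e + d : ℕ) : ℤ) - e) = (d : ℤ) := by push_cast; ring
    rw [this, rfz_nat, rfz_nat, Nat.cast_choose ℚ h]
    simp
    field_simp
  · rw [Nat.choose_eq_zero_of_lt h, rfz_neg (z := (m : ℤ) - e) (by omega)]; simp

lemma sum_choose_rec (m e : ℕ) :
    2 * ∑ j ∈ Finset.range (e + 1), (Nat.choose m j : ℚ)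
      - ∑ j ∈ Finset.range e, (Nat.choose (m + 1) j : ℚ)
      = 2 * (Nat.factorial m : ℚ) * rfz e * rfz ((m : ℤ) - e)
        + (Nat.factorial m : ℚ) * rfz ((e : ℤ) - 1) * rfz ((m : ℤ) - e + 1) := by
  induction e with
  | zero =>
    have := choose_rfz m 0
    simp at this
    rw [rfz_neg (z := ((0 : ℕ) : ℤ) - 1) (by simp)]
    simp
    linarith
  | succ e ih =>
    rw [Finset.sum_range_succ, Finset.sum_range_succ (fun j => (Nat.choose (m + 1) j : ℚ)) e]
    have h1 := choose_rfz m (e + 1)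
    have h2 := choose_rfz (m + 1) e
    rw [rfz_pred ((m : ℤ) - e + 1) ((m : ℤ) - e) (by ring),
      rfz_pred (e : ℤ) ((e : ℤ) - 1) (by ring)] at ih
    have e1 : (((m + 1 : ℕ) : ℤ) - e) = (m : ℤ) - e + 1 := by push_cast; ring
    have e2 : (((e + 1 : ℕ) : ℤ) - 1) = e := by push_cast; ring
    have e3 : ((m : ℤ) - ((e + 1 : ℕ) : ℤ) + 1) = m - e := by push_cast; ring
    rw [e1, Nat.factorial_succ] at h2
    rw [e2, e3, rfz_pred ((m : ℤ) - e + 1) ((m : ℤ) - e) (by ring)]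
    push_cast at *
    rw [h2, h1]
    linear_combination ih

/-- partial row sums -/
def Usum (l s : ℕ) : ℚ := ∑ j ∈ Finset.range (2 * l + 1 - s), (Nat.choose (l + s + 1) j : ℚ)

lemma Usum_rec (l s : ℕ) :
    2 * Usum l s - Usum l (s + 1) = (3 * (s : ℚ) + 4) * ((Nat.factorial (l + s + 1) : ℚ)
      * rfz (2 * s + 2 - l) * rfz (2 * l - s)) := by
  unfold Usum
  rcases lt_or_ge (2 * l) s with h | h
  · have h1 : 2 * l + 1 - s = 0 := by omega
    have h2 : 2 * l + 1 - (s + 1) = 0 := by omega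
    rw [h1, h2, rfz_neg (z := 2 * (l : ℤ) - s) (by omega)]
    simp
  · obtain ⟨e, he⟩ := Nat.exists_eq_add_of_le h
    have h1 : 2 * l + 1 - s = e + 1 := by omega
    have h2 : 2 * l + 1 - (s + 1) = e := by omega
    have heq : (2 : ℚ) * l = s + e := by exact_mod_cast he
    have hez : (2 : ℤ) * l = s + e := by exact_mod_cast he
    rw [h1, h2]
    have := sum_choose_rec (l + s + 1) e
    have e1 : (((l + s + 1 : ℕ) : ℤ) - e) = 2 * s + 1 - l := by push_cast; linarith
    have e4 : l + (s + 1) + 1 = l + s + 1 + 1 := by ring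
    have e5 : 2 * (l : ℤ) - s = e := by linarith
    rw [e4, this, e1, e5, rfz_pred (e : ℤ) ((e : ℤ) - 1) (by ring),
      show (2 * (s : ℤ) + 1 - l + 1) = 2 * s + 2 - l by ring,
      rfz_pred (2 * (s : ℤ) + 2 - l) (2 * (s : ℤ) + 1 - l) (by ring)]
    push_cast
    have : (e : ℚ) = 2 * l - s := by linarith
    rw [this]
    ring

/-- the coefficients -/
def cc (n l : ℕ) : ℚ := (-1) ^ l * (catalan l : ℚ) * (Nat.factorial (2 * n + 1 - l) : ℚ)
  * (Nat.factorial (n + l + 1) : ℚ) * rfz ((n : ℤ) - l) / (Nat.factorial (2 * n + l + 2) : ℚ)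

lemma cat_rec (l : ℕ) : ((l : ℚ) + 2) * catalan (l + 1) = 2 * (2 * l + 1) * catalan l := by
  have h1 := Nat.succ_mul_centralBinom_succ l
  have h2 := succ_mul_catalan_eq_centralBinom l
  have h3 := succ_mul_catalan_eq_centralBinom (l + 1)
  rw [← h2, ← h3] at h1
  have h1' : ((l : ℚ) + 1) * ((l + 1 + 1) * catalan (l + 1))
    = 2 * (2 * l + 1) * ((l + 1) * catalan l) := by exact_mod_cast h1
  have : (l : ℚ) + 1 ≠ 0 := by positivity
  apply mul_left_cancel₀ this
  linear_combination h1'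

lemma cc_rec (n l : ℕ) (h : l ≤ n) :
    ((l : ℚ) + 2) * (4 * ((n : ℚ) + 1) ^ 2 - (l + 1) ^ 2) * cc n (l + 1)
      = - 2 * (2 * l + 1) * (((n : ℚ) + 1) ^ 2 - (l + 1) ^ 2) * cc n l := by
  obtain ⟨d, rfl⟩ := Nat.exists_eq_add_of_le h
  unfold cc
  have a1 : 2 * (l + d) + 1 - (l + 1) = l + 2 * d := by omega
  have a2 : 2 * (l + d) + 1 - l = l + 2 * d + 1 := by omega
  have a3 : l + d + (l + 1) + 1 = (l + d + l + 1) + 1 := by omega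
  have a4 : 2 * (l + d) + (l + 1) + 2 = (2 * (l + d) + l + 2) + 1 := by omega
  rw [a1, a2, a3, a4, Nat.factorial_succ (l + 2 * d), Nat.factorial_succ (l + d + l + 1),
    Nat.factorial_succ (2 * (l + d) + l + 2),
    rfz_pred (((l + d : ℕ) : ℤ) - l) (((l + d : ℕ) : ℤ) - ((l + 1 : ℕ) : ℤ)) (by push_cast; ring)]
  have hc := cat_rec l
  have hc' : (catalan (l + 1) : ℚ) = 2 * (2 * l + 1) * catalan l / (l + 2) := by
    field_simp; linear_combination hc
  rw [hc']
  have := Nat.factorial_ne_zero (2 * (l + d) + l + 2)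
  push_cast
  field_simp
  ring

/-- the single sum -/
def Dsum (n s : ℕ) : ℚ := ∑ l ∈ Finset.range (n + 1), (3 * (l : ℚ) + 2) * cc n l *
  ((Nat.factorial (l + s) : ℚ) * rfz (2 * s - l) * rfz (2 * l + 1 - s))

lemma cc_top (n : ℕ) : cc n (n + 1) = 0 := by
  unfold cc
  rw [rfz_neg (z := (n : ℤ) - ((n + 1 : ℕ) : ℤ)) (by push_cast; linarith)]
  simp

lemma Dsum_rec (n s : ℕ) :
    (s : ℚ) * (4 * ((n : ℚ) + 1) ^ 2 - (s + 1) ^ 2) * Dsum n s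
     + 2 * (2 * s + 3) * (((n : ℚ) + 1) ^ 2 - (s + 1) ^ 2) * Dsum n (s + 1) = 0 := by
  let G : ℕ → ℚ := fun l => -3 * ((s : ℚ) + 1) * (((l : ℚ) + 1) * (4 * ((n : ℚ) + 1) ^ 2 - l ^ 2)
    * cc n l) * ((Nat.factorial (l + s) : ℚ) * rfz (2 * s + 2 - l) * rfz (2 * l - s - 1))
  have hG0 : G 0 = 0 := by
    simp only [G]
    rw [rfz_neg (z := 2 * ((0 : ℕ) : ℤ) - s - 1) (by push_cast; linarith)]
    simp
  have hGn : G (n + 1) = 0 := by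
    simp only [G, cc_top]; simp
  have key := Finset.sum_range_sub G (n + 1)
  rw [hG0, hGn, sub_zero] at key
  rw [← key]
  unfold Dsum
  rw [Finset.mul_sum, Finset.mul_sum, ← Finset.sum_add_distrib]
  apply Finset.sum_congr rfl
  intro l hl
  have hl' : l ≤ n := by simpa [Nat.lt_succ_iff] using hl
  have hc := cc_rec n l hl'
  simp only [G]
  have f1 : l + (s + 1) = l + s + 1 := by ring
  have f2 : l + 1 + s = l + s + 1 := by ring
  have z1 : 2 * ((s + 1 : ℕ) : ℤ) - l = 2 * s + 2 - l := by push_cast; ring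
  have z2 : 2 * (l : ℤ) + 1 - ((s + 1 : ℕ) : ℤ) = 2 * l - s := by push_cast; ring
  have z3 : 2 * (s : ℤ) + 2 - ((l + 1 : ℕ) : ℤ) = 2 * s + 1 - l := by push_cast; ring
  have z4 : 2 * ((l + 1 : ℕ) : ℤ) - s - 1 = 2 * l + 1 - s := by push_cast; ring
  rw [f1, f2, z1, z2, z3, z4, Nat.factorial_succ,
    rfz_pred (2 * (s : ℤ) + 1 - l) (2 * (s : ℤ) - l) (by ring),
    rfz_pred (2 * (s : ℤ) + 2 - l) (2 * (s : ℤ) + 1 - l) (by ring),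
    rfz_pred (2 * (l : ℤ) - s) (2 * (l : ℤ) - s - 1) (by ring),
    rfz_pred (2 * (l : ℤ) + 1 - s) (2 * (l : ℤ) - s) (by ring)]
  push_cast
  generalize rfz (2 * (s : ℤ) + 2 - l) = A
  generalize rfz (2 * (l : ℤ) + 1 - s) = B
  generalize (Nat.factorial (l + s) : ℚ) = F
  linear_combination (3 * ((s : ℚ) + 1)) * ((l + s + 1) * F * (2 * s + 2 - l) * A * B) * hc

lemma Dsum_zero (n s : ℕ) (h : s + 1 ≤ n) : Dsum n (s + 1) = 0 := by
  have hne : 2 * (2 * (s : ℚ) + 3) * (((n : ℚ) + 1) ^ 2 - (s + 1) ^ 2) ≠ 0 := by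
    have : (s : ℚ) + 1 ≤ n := by exact_mod_cast h
    have h2 : (0 : ℚ) ≤ s := by positivity
    have : (0 : ℚ) < ((n : ℚ) + 1) ^ 2 - (s + 1) ^ 2 := by nlinarith
    positivity
  induction s with
  | zero =>
    have := Dsum_rec n 0
    simp only [Nat.cast_zero, zero_mul, zero_add] at this hne ⊢
    exact (mul_eq_zero.mp this).resolve_left hne
  | succ s ih =>
    have := Dsum_rec n (s + 1)
    rw [ih (by omega) (by
      have : (s : ℚ) + 1 + 1 ≤ n := by exact_mod_cast h
      have h2 : (0 : ℚ) ≤ s := by positivity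
      have : (0 : ℚ) < ((n : ℚ) + 1) ^ 2 - (s + 1) ^ 2 := by nlinarith
      positivity), mul_zero, zero_add] at this
    exact (mul_eq_zero.mp this).resolve_left hne

/-- the base sum -/
def Bsum (n : ℕ) : ℚ := ∑ l ∈ Finset.range (n + 1), (3 * (l : ℚ) + 2) * cc n l * 2 ^ l

lemma Bsum_rec (n : ℕ) : Bsum n + Bsum (n + 1) = 1 := by
  let G : ℕ → ℚ := fun l => -(2 * (n : ℚ) + 3) * (l + 1) * (-1) ^ l * 2 ^ l * (catalan l : ℚ)
    * (Nat.factorial (2 * n + 2 - l) : ℚ) * (Nat.factorial (n + l + 1) : ℚ)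
    * rfz ((n : ℤ) + 1 - l) / (Nat.factorial (2 * n + l + 3) : ℚ)
  have hG0 : G 0 = -1 := by
    have : ((n : ℤ) + 1 - ((0 : ℕ) : ℤ)) = ((n + 1 : ℕ) : ℤ) := by push_cast; ring
    simp only [G]
    rw [this, rfz_nat]
    have e : 2 * n + 0 + 3 = (2 * n + 2) + 1 := by ring
    rw [e, Nat.factorial_succ (2 * n + 2)]
    have h1 := Nat.factorial_ne_zero (2 * n + 2)
    have h2 := Nat.factorial_ne_zero (n + 1)
    simp
    field_simp
    ring
  have hGn : G (n + 2) = 0 := by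
    simp only [G]
    rw [rfz_neg (z := (n : ℤ) + 1 - ((n + 2 : ℕ) : ℤ)) (by push_cast; linarith)]
    simp
  have key := Finset.sum_range_sub G (n + 2)
  rw [hG0, hGn] at key
  have hB : Bsum n = ∑ l ∈ Finset.range (n + 2), (3 * (l : ℚ) + 2) * cc n l * 2 ^ l := by
    rw [Finset.sum_range_succ, cc_top]; simp [Bsum]
  have : (1 : ℚ) = 0 - -1 := by norm_num
  rw [this, ← key, hB]
  unfold Bsum
  rw [← Finset.sum_add_distrib]
  apply Finset.sum_congr rfl
  intro l hl
  have hl' : l ≤ n + 1 := by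
    have := Finset.mem_range.mp hl
    omega
  simp only [G]
  unfold cc
  obtain ⟨m, hm⟩ : ∃ m, m + l = 2 * n + 1 := ⟨2 * n + 1 - l, by omega⟩
  have a1 : 2 * n + 1 - l = m := by omega
  have a2 : 2 * (n + 1) + 1 - l = m + 1 + 1 := by omega
  have a3 : 2 * n + 2 - l = m + 1 := by omega
  have a4 : 2 * n + 2 - (l + 1) = m := by omega
  have b1 : n + 1 + l + 1 = (n + l + 1) + 1 := by ring
  have b2 : n + (l + 1) + 1 = (n + l + 1) + 1 := by ring
  have b3 : 2 * (n + 1) + l + 2 = (2 * n + l + 2) + 1 + 1 := by ring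
  have b4 : 2 * n + l + 3 = (2 * n + l + 2) + 1 := by ring
  have b5 : 2 * n + (l + 1) + 3 = (2 * n + l + 2) + 1 + 1 := by ring
  have z1 : ((n + 1 : ℕ) : ℤ) - l = n + 1 - l := by push_cast; ring
  have z2 : (n : ℤ) + 1 - ((l + 1 : ℕ) : ℤ) = n - l := by push_cast; ring
  have hmq : (m : ℚ) = 2 * n + 1 - l := by
    have : (m : ℚ) + l = 2 * n + 1 := by exact_mod_cast hm
    linarith
  have hc' : (catalan (l + 1) : ℚ) = 2 * (2 * l + 1) * catalan l / (l + 2) := by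
    have := cat_rec l
    field_simp; linear_combination this
  rw [a1, a2, a3, a4, b1, b2, b3, b4, b5, z1, z2, hc',
    rfz_pred ((n : ℤ) + 1 - l) ((n : ℤ) - l) (by ring)]
  simp only [Nat.factorial_succ (m + 1), Nat.factorial_succ m, Nat.factorial_succ (n + l + 1),
    Nat.factorial_succ (2 * n + l + 2 + 1), Nat.factorial_succ (2 * n + l + 2)]
  have := Nat.factorial_ne_zero (2 * n + l + 2)
  push_cast
  rw [hmq]
  generalize rfz ((n : ℤ) + 1 - l) = A
  generalize (Nat.factorial (n + l + 1) : ℚ) = F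
  generalize (Nat.factorial m : ℚ) = M
  rw [pow_succ, pow_succ]
  field_simp
  ring

lemma Bsum_eq (n : ℕ) : 2 * Bsum n = 1 + (-1) ^ n := by
  induction n with
  | zero =>
    simp [Bsum, cc, rfz]
    norm_num
  | succ n ih =>
    have := Bsum_rec n
    rw [pow_succ]
    linarith

lemma cc_zero (n : ℕ) : cc n 0 = 1 / 2 := by
  unfold cc
  have : (n : ℤ) - ((0 : ℕ) : ℤ) = (n : ℤ) := by simp
  rw [this, rfz_nat]
  have e : 2 * n + 0 + 2 = (2 * n + 1) + 1 := by ring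
  rw [e, Nat.factorial_succ (2 * n + 1), Nat.add_zero, Nat.factorial_succ n]
  have h1 := Nat.factorial_ne_zero (2 * n + 1)
  have h2 := Nat.factorial_ne_zero n
  simp
  field_simp
  ring

/-- the full sum -/
def Ssum (n s : ℕ) : ℚ := ∑ l ∈ Finset.range (n + 1), (3 * (l : ℚ) + 2) * cc n l * Usum l s

lemma Usum_zero (l : ℕ) : Usum (l + 1) 0 = 2 * 2 ^ (l + 1) := by
  unfold Usum
  have h : ∑ j ∈ Finset.range (l + 1 + 0 + 1 + 1), (Nat.choose (l + 1 + 0 + 1) j : ℚ)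
      = 2 ^ (l + 2) := by
    exact_mod_cast Nat.sum_range_choose (l + 2)
  have h2 : ∑ j ∈ Finset.range (2 * (l + 1) + 1 - 0), (Nat.choose (l + 1 + 0 + 1) j : ℚ)
    = ∑ j ∈ Finset.range (l + 1 + 0 + 1 + 1), (Nat.choose (l + 1 + 0 + 1) j : ℚ) := by
    symm
    apply Finset.sum_subset
    · intro j hj
      simp at *
      omega
    · intro j _ hj
      rw [Nat.choose_eq_zero_of_lt (by simp at hj; omega)]
      simp
  rw [h2, h]
  ring

lemma Ssum_zero (n : ℕ) : Ssum n 0 = (-1) ^ n := by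
  have h := Bsum_eq n
  unfold Bsum at h
  unfold Ssum
  rw [Finset.sum_range_succ'] at h ⊢
  have : Usum 0 0 = 1 := by simp [Usum]
  rw [this, cc_zero]
  rw [cc_zero] at h
  have e : ∑ l ∈ Finset.range n, (3 * ((l + 1 : ℕ) : ℚ) + 2) * cc n (l + 1) * Usum (l + 1) 0
    = 2 * ∑ l ∈ Finset.range n, (3 * ((l + 1 : ℕ) : ℚ) + 2) * cc n (l + 1) * 2 ^ (l + 1) := by
    rw [Finset.mul_sum]
    apply Finset.sum_congr rfl
    intro l _
    rw [Usum_zero]; ring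
  rw [e]
  simp at h ⊢
  linarith

lemma Ssum_eq (n s : ℕ) (h : s ≤ n) : Ssum n s = (-1) ^ n * 2 ^ s := by
  induction s with
  | zero => simp [Ssum_zero]
  | succ s ih =>
    have hD := Dsum_zero n s h
    have : 2 * Ssum n s - Ssum n (s + 1) = (3 * (s : ℚ) + 4) * Dsum n (s + 1) := by
      unfold Ssum Dsum
      rw [Finset.mul_sum, Finset.mul_sum, ← Finset.sum_sub_distrib]
      apply Finset.sum_congr rfl
      intro l _
      have hU := Usum_rec l s
      have f1 : l + (s + 1) = l + s + 1 := by ring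
      have z1 : 2 * ((s + 1 : ℕ) : ℤ) - l = 2 * s + 2 - l := by push_cast; ring
      have z2 : 2 * (l : ℤ) + 1 - ((s + 1 : ℕ) : ℤ) = 2 * l - s := by push_cast; ring
      rw [f1, z1, z2]
      linear_combination (3 * (l : ℚ) + 2) * cc n l * hU
    rw [hD, ih (by omega)] at this
    rw [pow_succ]
    linarith

/-- For all `n ≥ 0` and `0 ≤ i ≤ n`:
`Σ_{k=0}^{n} Σ_{j=0}^{n+i−2k} g_{n,i}(k,j) = 2^{n−i}` (inner sum empty when `n+i−2k < 0`). -/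
theorem sum_gnik (n i : ℕ) (hi : i ≤ n) :
    ∑ k ∈ Finset.range (n+1), ∑ j ∈ Finset.range (n+i+1-2*k), gnik n i k j
      = 2^(n-i) := by
  have hS := Ssum_eq n (n - i) (by omega)
  have hm : ((-1 : ℚ) ^ n) * (-1) ^ n = 1 := by
    rw [← mul_pow]; simp
  have : (2 : ℚ) ^ (n - i) = (-1) ^ n * Ssum n (n - i) := by
    rw [hS, ← mul_assoc, hm, one_mul]
  rw [this, ← Finset.sum_range_reflect]
  unfold Ssum
  rw [Finset.mul_sum]
  apply Finset.sum_congr rfl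
  intro l hl
  have hl' : l ≤ n := by
    have := Finset.mem_range.mp hl
    omega
  obtain ⟨d, rfl⟩ := Nat.exists_eq_add_of_le hl'
  have k1 : l + d + 1 - 1 - l = d := by omega
  rw [k1]
  unfold gnik
  rw [← Finset.mul_sum]
  unfold Usum
  have r1 : 2 * l + 1 - (l + d - i) = l + d + i + 1 - 2 * d := by omega
  have r2 : l + (l + d - i) + 1 = 2 * (l + d) + 1 - i - d := by omega
  rw [r1, r2, ← mul_assoc]
  congr 1
  unfold fnk cc
  have z : (((l + d : ℕ) : ℤ) - l) = (d : ℤ) := by push_cast; ring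
  have s1 : l + d - d = l := by omega
  have s2 : 2 * (l + d) - d + 1 = l + d + l + 1 := by omega
  have s3 : 3 * (l + d) - d + 2 = 2 * (l + d) + l + 2 := by omega
  have s4 : 2 * (l + d) + 1 - l = l + d + d + 1 := by omega
  rw [z, rfz_nat, s1, s2, s3, s4]
  have hm : ((-1 : ℚ) ^ l) * (-1) ^ l = 1 := by
    rw [← mul_pow]; simp
  have hp : (-1 : ℚ) ^ d = (-1) ^ (l + d) * (-1) ^ l := by
    rw [pow_add]; linear_combination (-(-1 : ℚ) ^ d) * hm
  have h1 := Nat.factorial_ne_zero (2 * (l + d) + l + 2)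
  have h2 := Nat.factorial_ne_zero d
  rw [hp]
  push_cast
  field_simp
  ring
end

section
/- For all integers n ≥ 0 and 0 ≤ i ≤ n, one has Σ_{k=0}^{n} Σ_{j=0}^{n+k−2i} g_{n,i}(k,j) = (−1)^n · 2^{n−i}, where the inner sum runs over integers j with 0 ≤ j ≤ n+k−2i and is empty when n+k−2i < 0. -/
/-- Inverse factorial on the integers, zero at negative integers. -/
def ivf (z : ℤ) : ℚ := if z < 0 then 0 else 1 / (Nat.factorial z.toNat : ℚ)

lemma ivf_nat (m : ℕ) : ivf (m : ℤ) = 1 / (Nat.factorial m : ℚ) := by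
  simp [ivf]

lemma ivf_neg (z : ℤ) (h : z < 0) : ivf z = 0 := by
  simp [ivf, h]

lemma ivf_pred (z : ℤ) : ivf (z - 1) = (z : ℚ) * ivf z := by
  rcases lt_trichotomy z 0 with h | h | h
  · rw [ivf_neg _ h, ivf_neg _ (by omega), mul_zero]
  · subst h
    rw [ivf_neg _ (by omega)]; simp
  · obtain ⟨m, rfl⟩ : ∃ m : ℕ, z = ((m + 1 : ℕ) : ℤ) := ⟨(z - 1).toNat, by omega⟩
    have e : (((m + 1 : ℕ) : ℤ) - 1) = (m : ℤ) := by push_cast; ring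
    rw [e, ivf_nat, ivf_nat, Nat.factorial_succ]
    have := Nat.factorial_ne_zero m
    push_cast
    field_simp

lemma choose_ivf (M r : ℕ) :
    (Nat.choose M r : ℚ) = (Nat.factorial M : ℚ) * ivf r * ivf ((M : ℤ) - r) := by
  rcases le_or_gt r M with h | h
  · obtain ⟨s, rfl⟩ := Nat.exists_eq_add_of_le h
    have e : (((r + s : ℕ) : ℤ) - r) = (s : ℤ) := by push_cast; ring
    rw [e, ivf_nat, ivf_nat, Nat.cast_choose ℚ h]
    simp
    field_simp
  · rw [Nat.choose_eq_zero_of_lt h, ivf_neg ((M : ℤ) - r) (by omega)]; simp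

lemma T_step (M r : ℕ) :
    ∑ j ∈ Finset.range (r + 2), (Nat.choose (M + 1) j : ℚ)
      = 2 * ∑ j ∈ Finset.range r, (Nat.choose M j : ℚ)
        + (Nat.choose M (r + 1) + 2 * Nat.choose M r) := by
  induction r with
  | zero => simp [Finset.sum_range_succ]; ring
  | succ r ih =>
    rw [Finset.sum_range_succ, ih, Finset.sum_range_succ _ r, Nat.choose_succ_succ M (r + 1)]
    push_cast
    ring

lemma T_step' (M R : ℕ) :
    ∑ j ∈ Finset.range R, (Nat.choose (M + 1) j : ℚ)
      = 2 * ∑ j ∈ Finset.range (R - 2), (Nat.choose M j : ℚ)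
        + (Nat.factorial M : ℚ) * ((M : ℚ) + R) * ivf ((R : ℤ) - 1) * ivf ((M : ℤ) - R + 2) := by
  match R with
  | 0 => simp [ivf_neg]
  | 1 =>
    have e : ((M : ℤ) - (1 : ℕ) + 2) = ((M + 1 : ℕ) : ℤ) := by push_cast; ring
    have e2 : (((1 : ℕ) : ℤ) - 1) = ((0 : ℕ) : ℤ) := by simp
    rw [e, e2, ivf_nat, ivf_nat, Nat.factorial_succ]
    have := Nat.factorial_ne_zero M
    have h3 : (M : ℚ) + 1 ≠ 0 := by positivity
    simp
    field_simp
  | r + 2 =>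
    rw [T_step, choose_ivf, choose_ivf]
    have e1 : (((r + 2 : ℕ) : ℤ) - 1) = ((r : ℤ) + 1) := by push_cast; ring
    have e2 : ((M : ℤ) - (r + 2 : ℕ) + 2) = (M : ℤ) - r := by push_cast; ring
    have e3 : ((M : ℤ) - (r + 1 : ℕ)) = ((M : ℤ) - r) - 1 := by push_cast; ring
    have e4 : (r : ℤ) = ((r : ℤ) + 1) - 1 := by ring
    have h4 : ivf (r : ℤ) = ((r : ℚ) + 1) * ivf ((r : ℤ) + 1) := by
      rw [e4, ivf_pred]; push_cast; ring_nf
    rw [e1, e2, e3, ivf_pred, h4]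
    push_cast
    ring

/-- summand -/
def tt (n d l : ℕ) : ℚ :=
  (-1)^l * (3 * (l : ℚ) + 2) * (2*l).factorial * (d + l).factorial * (2*n-l+1).factorial *
    (n+l+1).factorial * ivf l * ivf ((l : ℤ) + 1) * ivf (2 * (d : ℤ) - l) *
    ivf (2 * (l : ℤ) - d + 1) * ivf ((n : ℤ) - l) * ivf (2 * (n : ℤ) + l + 2)

/-- certificate -/
def GG (n d l : ℕ) : ℚ :=
  (-1)^l * (2*l).factorial * (d + l).factorial * (2*n+2-l).factorial *
    (n+l+1).factorial * ivf l * ivf (l : ℤ) * ivf (2 * (d : ℤ) + 2 - l) *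
    ivf (2 * (l : ℤ) - d - 1) * ivf ((n : ℤ) - l) * ivf (2 * (n : ℤ) + l + 1)

lemma cert (n d l : ℕ) (h : l ≤ n) :
    (d : ℚ) * (2*n+d+3) * (2*n-d+1) * tt n d l
      + 2 * (2*d+3) * (n-d) * (n+d+2) * tt n (d+1) l
      = -3 * (d+1) * (GG n d (l+1) - GG n d l) := by
  obtain ⟨e, rfl⟩ := Nat.exists_eq_add_of_le h
  unfold tt GG
  have a1 : 2 * (l + e) - l + 1 = l + 2 * e + 1 := by omega
  have a2 : 2 * (l + e) + 2 - (l + 1) = l + 2 * e + 1 := by omega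
  have a3 : 2 * (l + e) + 2 - l = (l + 2 * e + 1) + 1 := by omega
  have a4 : 2 * (l + 1) = (2 * l + 1) + 1 := by omega
  have a5 : d + (l + 1) = (d + l) + 1 := by omega
  have a6 : d + 1 + l = (d + l) + 1 := by omega
  have a7 : l + e + (l + 1) + 1 = (l + e + l + 1) + 1 := by omega
  rw [a1, a2, a3, a4, a5, a6, a7]
  simp only [Nat.factorial_succ (2 * l + 1), Nat.factorial_succ (2 * l),
    Nat.factorial_succ (d + l), Nat.factorial_succ (l + 2 * e + 1),
    Nat.factorial_succ (l + e + l + 1)]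
  have b1 : ivf (l : ℤ) = ((l : ℚ) + 1) * ivf ((l : ℤ) + 1) := by
    have := ivf_pred ((l : ℤ) + 1)
    rw [add_sub_cancel_right] at this; rw [this]; push_cast; ring
  have b2 : ivf (2 * (d : ℤ) + 1 - l) = (2 * (d : ℚ) + 2 - l) * ivf (2 * (d : ℤ) + 2 - l) := by
    have := ivf_pred (2 * (d : ℤ) + 2 - l)
    rw [show 2 * (d : ℤ) + 1 - l = 2 * (d : ℤ) + 2 - l - 1 by ring, this]; push_cast; ring
  have b3 : ivf (2 * (d : ℤ) - l) = (2 * (d : ℚ) + 1 - l) * ivf (2 * (d : ℤ) + 1 - l) := by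
    have := ivf_pred (2 * (d : ℤ) + 1 - l)
    rw [show 2 * (d : ℤ) - l = 2 * (d : ℤ) + 1 - l - 1 by ring, this]; push_cast; ring
  have b4 : ivf (2 * (l : ℤ) - d) = (2 * (l : ℚ) - d + 1) * ivf (2 * (l : ℤ) - d + 1) := by
    have := ivf_pred (2 * (l : ℤ) - d + 1)
    rw [add_sub_cancel_right] at this; rw [this]; push_cast; ring
  have b5 : ivf (2 * (l : ℤ) - d - 1) = (2 * (l : ℚ) - d) * ivf (2 * (l : ℤ) - d) := by
    rw [ivf_pred]; push_cast; ring
  have b6 : ivf ((e : ℤ) - 1) = (e : ℚ) * ivf (e : ℤ) := by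
    rw [ivf_pred]; push_cast; ring
  have b7 : ivf (2 * ((l : ℤ) + e) + l + 1)
      = (2 * ((l : ℚ) + e) + l + 2) * ivf (2 * ((l : ℤ) + e) + l + 2) := by
    have := ivf_pred (2 * ((l : ℤ) + e) + l + 2)
    rw [show 2 * ((l : ℤ) + e) + l + 1 = 2 * ((l : ℤ) + e) + l + 2 - 1 by ring, this]
    push_cast; ring
  push_cast
  rw [show 2 * ((d : ℤ) + 1) - l = 2 * (d : ℤ) + 2 - l by ring,
    show 2 * (l : ℤ) - (d + 1) + 1 = 2 * (l : ℤ) - d by ring,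
    show 2 * (d : ℤ) + 2 - (l + 1) = 2 * (d : ℤ) + 1 - l by ring,
    show 2 * ((l : ℤ) + 1) - d - 1 = 2 * (l : ℤ) - d + 1 by ring,
    show (l : ℤ) + e - (l + 1) = (e : ℤ) - 1 by ring,
    show (l : ℤ) + e - l = (e : ℤ) by ring,
    show 2 * ((l : ℤ) + e) + (l + 1) + 1 = 2 * ((l : ℤ) + e) + l + 2 by ring,
    b7, b6, b5, b4, b3, b2, b1, pow_succ]
  ring

lemma sum_tt_step (n d : ℕ) :
    (d : ℚ) * (2*n+d+3) * (2*n-d+1) * ∑ l ∈ Finset.range (n+1), tt n d l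
      + 2 * (2*d+3) * (n-d) * (n+d+2) * ∑ l ∈ Finset.range (n+1), tt n (d+1) l = 0 := by
  rw [Finset.mul_sum, Finset.mul_sum, ← Finset.sum_add_distrib]
  rw [Finset.sum_congr rfl (fun l hl => cert n d l (by simp at hl; omega))]
  rw [← Finset.mul_sum, Finset.sum_range_sub]
  have h1 : GG n d (n+1) = 0 := by
    unfold GG
    rw [ivf_neg ((n : ℤ) - ((n + 1 : ℕ) : ℤ)) (by push_cast; omega)]; ring
  have h2 : GG n d 0 = 0 := by
    unfold GG
    rw [ivf_neg (2 * ((0 : ℕ) : ℤ) - d - 1) (by push_cast; omega)]; ring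
  rw [h1, h2]; ring

lemma sum_tt (n d : ℕ) (h : d < n) : ∑ l ∈ Finset.range (n+1), tt n (d+1) l = 0 := by
  have key : (d : ℚ) * (2*n+d+3) * (2*n-d+1) * ∑ l ∈ Finset.range (n+1), tt n d l = 0 := by
    cases d with
    | zero => simp
    | succ d => rw [sum_tt n d (by omega), mul_zero]
  have := sum_tt_step n d
  rw [key, zero_add] at this
  have h1 : (n : ℚ) - d ≠ 0 := by
    have : (d : ℚ) < n := by exact_mod_cast h
    intro h; linarith
  have h2 : (n : ℚ) + d + 2 ≠ 0 := by positivity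
  have h3 : (2 * (d : ℚ) + 3) ≠ 0 := by positivity
  rcases mul_eq_zero.1 this with h | h
  · exfalso; revert h; simp only [mul_eq_zero]; simp [h1, h2, h3]
  · exact h

/-- coefficients -/
def ak (n k : ℕ) : ℚ := fnk n k / 2^(n-k)

lemma cat_ivf (l : ℕ) :
    (catalan l : ℚ) = (2*l).factorial * ivf l * ivf ((l : ℤ) + 1) := by
  have h := succ_mul_catalan_eq_centralBinom l
  have h' : ((l : ℚ) + 1) * catalan l = (Nat.choose (2*l) l : ℚ) := by
    rw [← Nat.centralBinom_eq_two_mul_choose, ← h]; push_cast; ring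
  have b1 : ivf (l : ℤ) = ((l : ℚ) + 1) * ivf ((l : ℤ) + 1) := by
    have := ivf_pred ((l : ℤ) + 1)
    rw [add_sub_cancel_right] at this; rw [this]; push_cast; ring
  rw [choose_ivf, show (((2 * l : ℕ) : ℤ) - l) = (l : ℤ) by push_cast; ring] at h'
  have h3 : (l : ℚ) + 1 ≠ 0 := by positivity
  apply mul_left_cancel₀ h3
  rw [h']
  nth_rw 2 [b1]
  ring

lemma ak_eq (k l : ℕ) :
    ak (k + l) k = (-1)^(k+l) * ((-1)^l * (3 * (l : ℚ) + 2) * (2*l).factorial *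
      (2*(k+l)-l+1).factorial * (k+l+l+1).factorial * ivf l * ivf ((l : ℤ) + 1) *
      ivf (((k+l : ℕ) : ℤ) - l) * ivf (2 * ((k + l : ℕ) : ℤ) + l + 2)) := by
  unfold ak fnk
  rw [show k + l - k = l by omega, cat_ivf,
    show (((k+l : ℕ) : ℤ) - l) = (k : ℤ) by push_cast; ring,
    show 2 * ((k + l : ℕ) : ℤ) + l + 2 = ((3 * (k + l) - k + 2 : ℕ) : ℤ) by omega,
    ivf_nat k, ivf_nat (3 * (k + l) - k + 2)]
  have e1 : 2 * (k + l) - l + 1 = k + l + k + 1 := by omega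
  have e2 : 2 * (k + l) - k + 1 = k + l + l + 1 := by omega
  rw [e1, e2]
  have hp : ((-1 : ℚ))^(k+l) * (-1)^l = (-1)^k := by
    rw [pow_add, mul_assoc, ← mul_pow]; simp
  rw [← hp]
  have h1 := Nat.factorial_ne_zero k
  have h2 := Nat.factorial_ne_zero (3 * (k + l) - k + 2)
  push_cast
  field_simp
  ring

/-- left side -/
def SS (n i : ℕ) : ℚ :=
  ∑ k ∈ Finset.range (n+1), ak n k *
    ∑ j ∈ Finset.range (n+k+1-2*i), (Nat.choose (2*n+1-i-k) j : ℚ)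

lemma term_step (n i k : ℕ) (hi : i < n) (hk : k ≤ n) :
    ak n k * ∑ j ∈ Finset.range (n+k+1-2*i), (Nat.choose (2*n+1-i-k) j : ℚ)
    = 2 * (ak n k * ∑ j ∈ Finset.range (n+k+1-2*(i+1)), (Nat.choose (2*n+1-(i+1)-k) j : ℚ))
      + (-1)^n * (3 * (n : ℚ) - 3 * i + 1) * tt n (n - i) (n - k) := by
  obtain ⟨l, rfl⟩ := Nat.exists_eq_add_of_le hk
  rw [show 2 * (k + l) + 1 - i - k = (2 * (k + l) - i - k) + 1 by omega,
    show 2 * (k + l) + 1 - (i + 1) - k = (2 * (k + l) - i - k) by omega, T_step',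
    show k + l + k + 1 - 2 * (i + 1) = k + l + k + 1 - 2 * i - 2 by omega]
  rw [mul_add]
  congr 1
  · ring
  rw [show k + l - k = l by omega, ak_eq, tt]
  have hM : k + l - i + l = 2 * (k + l) - i - k := by omega
  rw [hM]
  rcases le_or_gt (2 * i) (k + l + k) with h | h
  · have c1 : (((2 * (k + l) - i - k : ℕ) : ℚ) + ((k + l + k + 1 - 2 * i : ℕ) : ℚ))
        = 3 * ((k + l : ℕ) : ℚ) - 3 * i + 1 := by
      rw [Nat.cast_sub (by omega), Nat.cast_sub (by omega), Nat.cast_sub (by omega)]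
      push_cast; ring
    have c2 : (((k + l + k + 1 - 2 * i : ℕ) : ℤ) - 1) = 2 * ((k + l - i : ℕ) : ℤ) - l := by omega
    have c3 : (((2 * (k + l) - i - k : ℕ) : ℤ) - ((k + l + k + 1 - 2 * i : ℕ) : ℤ) + 2)
        = 2 * (l : ℤ) - ((k + l - i : ℕ) : ℤ) + 1 := by omega
    rw [c1, c2, c3]
    ring
  · rw [ivf_neg (((k + l + k + 1 - 2 * i : ℕ) : ℤ) - 1) (by omega),
      ivf_neg (2 * ((k + l - i : ℕ) : ℤ) - l) (by omega)]
    ring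

lemma SS_step (n i : ℕ) (hi : i < n) : SS n i = 2 * SS n (i+1) := by
  unfold SS
  rw [Finset.sum_congr rfl
    (fun k hk => term_step n i k hi (by simp at hk; omega)), Finset.sum_add_distrib,
    ← Finset.mul_sum, ← Finset.mul_sum]
  have := Finset.sum_range_reflect (fun l => tt n (n - i) l) (n + 1)
  simp only [Nat.add_sub_cancel] at this
  have h2 : ∑ k ∈ Finset.range (n+1), tt n (n-i) (n-k) = 0 := by
    rw [this, show n - i = (n - i - 1) + 1 by omega]
    exact sum_tt n _ (by omega)
  rw [h2]; ring

lemma SS_base (n : ℕ) : SS n n = (-1)^n := by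
  unfold SS
  rw [Finset.sum_range_succ, Finset.sum_eq_zero]
  · have := ak_eq n 0
    simp only [Nat.add_zero] at this
    rw [this, show n + n + 1 - 2 * n = 1 by omega,
      show 2 * n - 0 + 1 = 2 * n + 1 by omega,
      show ((n : ℤ) - ((0 : ℕ) : ℤ)) = (n : ℤ) by simp,
      show 2 * (n : ℤ) + ((0 : ℕ) : ℤ) + 2 = ((2 * n + 1 + 1 : ℕ) : ℤ) by push_cast; ring,
      show (((0 : ℕ) : ℤ) + 1) = ((1 : ℕ) : ℤ) by simp,
      ivf_nat, ivf_nat, ivf_nat, ivf_nat, Nat.factorial_succ (2 * n + 1), Nat.factorial_succ n]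
    have h1 := Nat.factorial_ne_zero n
    have h2 := Nat.factorial_ne_zero (2 * n + 1)
    have h3 : (n : ℚ) + 1 ≠ 0 := by positivity
    have h4 : 2 * (n : ℚ) + 1 + 1 ≠ 0 := by positivity
    simp
    field_simp
    ring
  · intro k hk
    simp at hk
    rw [show n + k + 1 - 2 * n = 0 by omega]; simp

lemma SS_eq (n m : ℕ) (h : m ≤ n) : SS n (n - m) = (-1)^n * 2^m := by
  induction m with
  | zero => simp [SS_base]
  | succ m ih =>
    rw [SS_step n _ (by omega), show n - (m + 1) + 1 = n - m by omega, ih (by omega)]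
    ring

/-- For all `n ≥ 0` and `0 ≤ i ≤ n`:
`Σ_{k=0}^{n} Σ_{j=0}^{n+k−2i} g_{n,i}(k,j) = (−1)^n·2^{n−i}` (inner sum empty when `n+k−2i < 0`). -/
theorem sum_gnik_prime (n i : ℕ) (hi : i ≤ n) :
    ∑ k ∈ Finset.range (n+1), ∑ j ∈ Finset.range (n+k+1-2*i), gnik n i k j
      = (-1 : ℚ)^n * 2^(n-i) := by
  have h := SS_eq n (n - i) (by omega)
  rw [show n - (n - i) = i by omega] at h
  rw [← h]
  unfold SS
  refine Finset.sum_congr rfl (fun k _ => ?_)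
  rw [Finset.mul_sum]
  rfl
end

section
/- For all integers n ≥ 1 and 0 ≤ i ≤ n−1, one has Σ_{k=0}^{n} f'_{n,i}(k) = 0. -/
/-- `invFact m = 1/m!`, with the convention `1/m! = 0` for negative integers `m`. -/
def invFact (m : ℤ) : ℚ := if 0 ≤ m then ((m.toNat).factorial : ℚ)⁻¹ else 0

/-- `f'_{n,i}(k) = (−1)^{k+1}·(3n−3k+2)·C_{n−k}·(n+k+1)!·(2n−k+1)!·(2n−i−k)!
   / (k!·(3n−k+2)!·(n+i−2k+1)!·(n+k−2i)!)`, with `1/m! = 0` for `m < 0`. -/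
def f'nik (n i k : ℕ) : ℚ :=
  (-1)^(k+1) * (3*(n:ℚ) - 3*(k:ℚ) + 2) * (catalan (n-k) : ℚ) *
    (Nat.factorial (n+k+1) : ℚ) * (Nat.factorial (2*n-k+1) : ℚ) *
    (Nat.factorial (2*n-i-k) : ℚ) /
    ((Nat.factorial k : ℚ) * (Nat.factorial (3*n-k+2) : ℚ)) *
    invFact ((n:ℤ) + (i:ℤ) - 2*(k:ℤ) + 1) * invFact ((n:ℤ) + (k:ℤ) - 2*(i:ℤ))

lemma invFact_pred (m : ℤ) : invFact (m - 1) = (m : ℚ) * invFact m := by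
  unfold invFact
  rcases lt_trichotomy m 0 with h | h | h
  · rw [if_neg (by omega), if_neg (by omega)]; simp
  · subst h; simp
  · obtain ⟨a, rfl⟩ : ∃ a : ℕ, m = (a : ℤ) + 1 := ⟨(m - 1).toNat, by omega⟩
    rw [if_pos (by omega), if_pos (by omega)]
    have h1 : ((a : ℤ) + 1 - 1).toNat = a := by omega
    have h2 : ((a : ℤ) + 1).toNat = a + 1 := by omega
    rw [h1, h2, Nat.factorial_succ]
    have := Nat.factorial_ne_zero a
    push_cast
    field_simp

lemma catalan_rec (m : ℕ) :
    ((m : ℚ) + 2) * (catalan (m+1) : ℚ) = 2 * (2 * m + 1) * (catalan m : ℚ) := by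
  have h1 := Nat.succ_mul_centralBinom_succ m
  have h2 := succ_mul_catalan_eq_centralBinom m
  have h3 := succ_mul_catalan_eq_centralBinom (m+1)
  rw [← h2, ← h3] at h1
  have h4 : ((m : ℚ) + 1) * (((m : ℚ) + 1 + 1) * (catalan (m+1) : ℚ))
      = 2 * (2 * m + 1) * (((m : ℚ) + 1) * (catalan m : ℚ)) := by exact_mod_cast h1
  have h5 : (m : ℚ) + 1 ≠ 0 := by positivity
  apply mul_left_cancel₀ h5
  linear_combination h4

/-- The telescoping certificate. -/
def Gcert (n i k : ℕ) : ℚ :=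
  3 * ((n:ℚ) - i) * (2 * (2*(n:ℚ) - 2*k + 1) * (2*(n:ℚ) - k + 2) * k * ((n:ℚ) + k - 2*i)) *
  ((-1)^(k+1) * (catalan (n-k) : ℚ) *
    (Nat.factorial (n+k+1) : ℚ) * (Nat.factorial (2*n-k+1) : ℚ) *
    (Nat.factorial (2*n-i-k) : ℚ) /
    ((Nat.factorial k : ℚ) * (Nat.factorial (3*n-k+2) : ℚ)) *
    invFact ((n:ℤ) + (i:ℤ) - 2*(k:ℤ) + 2) * invFact ((n:ℤ) + (k:ℤ) - 2*(i:ℤ)))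

set_option maxRecDepth 10000 in
set_option maxHeartbeats 1000000 in
lemma cert_step (n i k : ℕ) (hi : i + 1 ≤ n) (hk : k ≤ n) :
    -2 * (2*(n:ℚ) - 2*i + 1) * (i + 1) * (2*n + 1 - i) * f'nik n i k
      - ((n:ℚ) - 1 - i) * (3*n - i + 2) * (n + i + 2) * f'nik n (i+1) k
      = Gcert n i (k+1) - Gcert n i k := by
  have hX1 := invFact_pred ((n:ℤ) + (i:ℤ) - 2*(k:ℤ) + 2)
  have hX2 := invFact_pred ((n:ℤ) + (i:ℤ) - 2*(k:ℤ) + 1)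
  have hY1 := invFact_pred ((n:ℤ) + (k:ℤ) - 2*(i:ℤ))
  have hY2 := invFact_pred ((n:ℤ) + (k:ℤ) - 2*(i:ℤ) - 1)
  have hY0 := invFact_pred ((n:ℤ) + (k:ℤ) - 2*(i:ℤ) + 1)
  rw [show (n:ℤ) + (i:ℤ) - 2*(k:ℤ) + 2 - 1 = (n:ℤ) + (i:ℤ) - 2*(k:ℤ) + 1 by ring] at hX1
  rw [show (n:ℤ) + (i:ℤ) - 2*(k:ℤ) + 1 - 1 = (n:ℤ) + (i:ℤ) - 2*(k:ℤ) by ring] at hX2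
  rw [show (n:ℤ) + (k:ℤ) - 2*(i:ℤ) + 1 - 1 = (n:ℤ) + (k:ℤ) - 2*(i:ℤ) by ring] at hY0
  unfold f'nik Gcert
  rw [show (n:ℤ) + ((i+1:ℕ):ℤ) - 2*(k:ℤ) + 1 = (n:ℤ) + (i:ℤ) - 2*(k:ℤ) + 2 by push_cast; ring,
    show (n:ℤ) + (k:ℤ) - 2*((i+1:ℕ):ℤ) = (n:ℤ) + (k:ℤ) - 2*(i:ℤ) - 1 - 1 by push_cast; ring,
    show (n:ℤ) + (i:ℤ) - 2*((k+1:ℕ):ℤ) + 2 = (n:ℤ) + (i:ℤ) - 2*(k:ℤ) by push_cast; ring,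
    show (n:ℤ) + ((k+1:ℕ):ℤ) - 2*(i:ℤ) = (n:ℤ) + (k:ℤ) - 2*(i:ℤ) + 1 by push_cast; ring]
  rw [hY2, hY1, hX2, hX1]
  rw [hX1] at hX2
  have hXz : k = n → invFact ((n:ℤ) + (i:ℤ) - 2*(k:ℤ)) = 0 := by
    intro h; unfold invFact; rw [if_neg (by omega)]
  rw [hX2] at hXz
  generalize invFact ((n:ℤ) + (i:ℤ) - 2*(k:ℤ) + 2) = X at *
  generalize invFact ((n:ℤ) + (k:ℤ) - 2*(i:ℤ) + 1) = Z at *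
  rw [hY0]
  clear hX1 hX2 hY1 hY2 hY0
  push_cast at hXz ⊢
  have hBn : (2*n-k+1).factorial = (2*n-k+1) * (2*n-k).factorial := Nat.factorial_succ _
  have hDn : (2*n-i-k).factorial = (2*n-i-k) * (2*n-i-k-1).factorial := by
    rw [← Nat.mul_factorial_pred (by omega)]
  have hHn : (3*n-k+2).factorial = (3*n-k+2) * (3*n-k+1).factorial := Nat.factorial_succ _
  have hB : ((2*n-k+1).factorial : ℚ) = (2*(n:ℚ)-k+1) * ((2*n-k).factorial : ℚ) := by
    rw [hBn]; push_cast [Nat.cast_sub (show k ≤ 2*n by omega)]; ring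
  have hD : ((2*n-i-k).factorial : ℚ) = (2*(n:ℚ)-i-k) * ((2*n-i-k-1).factorial : ℚ) := by
    rw [hDn]
    push_cast [Nat.cast_sub (show k ≤ 2*n-i by omega), Nat.cast_sub (show i ≤ 2*n by omega)]; ring
  have hH : ((3*n-k+2).factorial : ℚ) = (3*(n:ℚ)-k+2) * ((3*n-k+1).factorial : ℚ) := by
    rw [hHn]; push_cast [Nat.cast_sub (show k ≤ 3*n by omega)]; ring
  have hA : ((n+(k+1)+1).factorial : ℚ) = ((n:ℚ)+k+2) * ((n+k+1).factorial : ℚ) := by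
    rw [show n+(k+1)+1 = (n+k+1)+1 by ring, Nat.factorial_succ]; push_cast; ring
  have hE : ((k+1).factorial : ℚ) = ((k:ℚ)+1) * (k.factorial : ℚ) := by
    rw [Nat.factorial_succ]; push_cast; ring
  have hH0 : (3*(n:ℚ)-k+2) ≠ 0 := by
    have : (k:ℚ) ≤ n := by exact_mod_cast hk
    have : (0:ℚ) ≤ n := by positivity
    intro h; linarith
  have hk0 : ((k:ℚ)+1) ≠ 0 := by positivity
  have hHf : ((3*n-k+1).factorial : ℚ) ≠ 0 := by exact_mod_cast Nat.factorial_ne_zero _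
  have hEf : (k.factorial : ℚ) ≠ 0 := by exact_mod_cast Nat.factorial_ne_zero _
  rw [show 2*n-(i+1)-k = 2*n-i-k-1 by omega, show 2*n-i-(k+1) = 2*n-i-k-1 by omega, hB, hD, hH, hA, hE]
  rcases Nat.lt_or_ge k n with hlt | hge
  · rw [show 2*n-(k+1)+1 = 2*n-k by omega, show 3*n-(k+1)+2 = 3*n-k+1 by omega]
    obtain ⟨m, hm⟩ : ∃ m, n = k + m + 1 := ⟨n - k - 1, by omega⟩
    rw [show n - k = m + 1 by omega, show n - (k+1) = m by omega]
    have hc := catalan_rec m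
    have hC : (catalan (m+1) : ℚ) = 2 * (2 * m + 1) * (catalan m : ℚ) / ((m : ℚ) + 2) := by
      rw [← hc]; field_simp
    have hmq : (m : ℚ) = n - k - 1 := by rw [hm]; push_cast; ring
    have hm2 : (m:ℚ) + 2 ≠ 0 := by positivity
    rw [hC]
    rw [hmq] at hm2 ⊢
    generalize ((3*n-k+1).factorial : ℚ) = H at *
    generalize ((2*n-k).factorial : ℚ) = B at *
    generalize ((2*n-i-k-1).factorial : ℚ) = D at *
    generalize ((n+k+1).factorial : ℚ) = A at *
    generalize (k.factorial : ℚ) = E at *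
    generalize (catalan m : ℚ) = C at *
    push_cast
    rw [pow_succ (-1:ℚ) (k+1)]
    generalize (-1:ℚ)^(k+1) = s
    clear hc hC hmq hm hBn hDn hHn hB hD hH hA hE
    generalize (n:ℚ) = N at *
    generalize (k:ℚ) = K at *
    generalize (i:ℚ) = I at *
    clear hXz
    obtain ⟨W, hW⟩ : ∃ W, W = 3 * N - K + 2 := ⟨_, rfl⟩
    obtain ⟨V, hV⟩ : ∃ V, V = N - K - 1 + 2 := ⟨_, rfl⟩
    obtain ⟨L, hL⟩ : ∃ L, L = K + 1 := ⟨_, rfl⟩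
    rw [← hW] at hH0 ⊢
    rw [← hV] at hm2 ⊢
    rw [← hL] at hk0 ⊢
    field_simp
    subst hW hV hL
    ring
  · obtain rfl : k = n := by omega
    have hz := hXz rfl
    rw [hz]
    rw [show k - k = 0 by omega, catalan_zero]
    generalize ((3*k-k+1).factorial : ℚ) = H at *
    generalize ((2*k-k).factorial : ℚ) = B at *
    generalize ((2*k-i-k-1).factorial : ℚ) = D at *
    generalize ((k+k+1).factorial : ℚ) = A at *
    generalize (k.factorial : ℚ) = E at *
    push_cast
    generalize (-1:ℚ)^(k+1) = s
    clear hXz hBn hDn hHn hB hD hH hA hE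
    generalize (k:ℚ) = K at *
    generalize (i:ℚ) = I at *
    have hK : 2 * K + 2 ≠ 0 := by intro h; apply hH0; linear_combination h
    rw [show 3 * K - K + 2 = 2 * K + 2 by ring]
    linear_combination (3 * (K - I)) * (-(2*K+2)*(2*K+2)) * (s * A * ((K + 1) * B) * D /
      (E * ((2 * K + 2) * H))) * ((2 * K - 2 * I + 1) * Z) * hz

theorem sum_f'nik (n : ℕ) (hn : 1 ≤ n) (i : ℕ) (hi : i + 1 ≤ n) :
    ∑ k ∈ Finset.range (n+1), f'nik n i k = 0 := by
  have key : ∀ i : ℕ, i + 1 ≤ n →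
      -2 * (2*(n:ℚ) - 2*i + 1) * (i + 1) * (2*n + 1 - i) * ∑ k ∈ Finset.range (n+1), f'nik n i k
      - ((n:ℚ) - 1 - i) * (3*n - i + 2) * (n + i + 2) *
        ∑ k ∈ Finset.range (n+1), f'nik n (i+1) k = 0 := by
    intro i hi
    rw [Finset.mul_sum, Finset.mul_sum, ← Finset.sum_sub_distrib]
    rw [Finset.sum_congr rfl (fun k hk => cert_step n i k hi
      (by have := Finset.mem_range.mp hk; omega)), Finset.sum_range_sub]
    have h0 : Gcert n i 0 = 0 := by simp [Gcert]
    have h1 : Gcert n i (n+1) = 0 := by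
      have : invFact ((n:ℤ) + (i:ℤ) - 2*((n+1:ℕ):ℤ) + 2) = 0 := by
        unfold invFact; rw [if_neg (by push_cast; omega)]
      unfold Gcert; rw [this]; ring
    rw [h0, h1, sub_zero]
  have main : ∀ j i : ℕ, i + 1 + j = n → ∑ k ∈ Finset.range (n+1), f'nik n i k = 0 := by
    intro j
    induction j with
    | zero =>
      intro i h
      have hh := key i (by omega)
      have hq : (n:ℚ) = i + 1 := by rw [← h]; push_cast; ring
      rw [show (n:ℚ) - 1 - i = 0 by rw [hq]; ring, zero_mul, zero_mul, zero_mul, sub_zero] at hh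
      refine (mul_eq_zero.mp hh).resolve_left ?_
      have e : -2 * (2*(n:ℚ) - 2*i + 1) * (i + 1) * (2*n + 1 - i)
        = -(2 * 3 * (i+1) * (i + 3)) := by rw [hq]; ring
      rw [e]
      exact neg_ne_zero.mpr (by positivity)
    | succ j ih =>
      intro i h
      have hh := key i (by omega)
      rw [ih (i+1) (by omega), mul_zero, sub_zero] at hh
      refine (mul_eq_zero.mp hh).resolve_left ?_
      have hq : (n:ℚ) = i + 1 + (j + 1) := by rw [← h]; push_cast; ring
      have e : -2 * (2*(n:ℚ) - 2*i + 1) * (i + 1) * (2*n + 1 - i)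
        = -(2 * (2 * j + 5) * (i+1) * (i + 2 * j + 5)) := by rw [hq]; ring
      rw [e]
      exact neg_ne_zero.mpr (by positivity)
  exact main (n - (i+1)) i (by omega)
end

section
/- For all integers n ≥ 1, 0 ≤ i ≤ n−2 and 0 ≤ k ≤ n−1, one has 2(i+1)(i−2n−1)(2i−2n−1)·f'_{n,i}(k) + (i−3n−2)(i−n+1)(i+n+2)·f'_{n,i+1}(k) = P(k+1,i) − P(k,i). -/
/-- `P(k,i) = (−1)^{k+1}·6k·(i−n)·(2n+1−2k)·(2n+2−k)·C_{n−k}·(n+k+1)!·(2n−k+1)!·(2n−i−k)!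
   / (k!·(3n−k+2)!·(n+i+2−2k)!·(n+k−2i−1)!)`, with `1/m! = 0` for `m < 0`. -/
def Pki (n k i : ℕ) : ℚ :=
  (-1)^(k+1) * 6 * (k:ℚ) * ((i:ℚ) - (n:ℚ)) * (2*(n:ℚ)+1-2*(k:ℚ)) * (2*(n:ℚ)+2-(k:ℚ)) *
    (catalan (n-k) : ℚ) *
    (Nat.factorial (n+k+1) : ℚ) * (Nat.factorial (2*n-k+1) : ℚ) *
    (Nat.factorial (2*n-i-k) : ℚ) /
    ((Nat.factorial k : ℚ) * (Nat.factorial (3*n-k+2) : ℚ)) *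
    invFact ((n:ℤ) + (i:ℤ) + 2 - 2*(k:ℤ)) * invFact ((n:ℤ) + (k:ℤ) - 2*(i:ℤ) - 1)

theorem invFact_step (m : ℤ) : invFact m = ((m:ℚ)+1) * invFact (m+1) := by
  unfold invFact
  rcases lt_trichotomy m (-1) with h | h | h
  · rw [if_neg (by omega), if_neg (by omega)]; simp
  · subst h; simp
  · obtain ⟨a, rfl⟩ := Int.eq_ofNat_of_zero_le (show 0 ≤ m by omega)
    rw [if_pos (by omega), if_pos (by omega)]
    have h1 : ((a:ℤ)+1).toNat = a + 1 := by omega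
    rw [h1, Int.toNat_natCast, Nat.factorial_succ]
    have : (a.factorial : ℚ) ≠ 0 := by positivity
    have h2 : (a:ℚ)+1 ≠ 0 := by positivity
    push_cast
    field_simp

theorem catalan_step (m : ℕ) :
    ((m:ℚ)+2) * (catalan (m+1) : ℚ) = 2*(2*(m:ℚ)+1) * (catalan m : ℚ) := by
  have h1 := succ_mul_catalan_eq_centralBinom m
  have h2 := succ_mul_catalan_eq_centralBinom (m+1)
  have h3 := Nat.succ_mul_centralBinom_succ m
  rw [← h1, ← h2] at h3
  have h4 : ((m:ℚ)+1) * ((m+1+1) * catalan (m+1)) = 2*(2*m+1)*((m+1)*catalan m) := by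
    exact_mod_cast h3
  have h5 : (m:ℚ)+1 ≠ 0 := by positivity
  apply mul_left_cancel₀ h5
  linear_combination h4

theorem f'nik_certificate (n : ℕ) (hn : 1 ≤ n) (i k : ℕ) (hi : i + 2 ≤ n) (hk : k + 1 ≤ n) :
    2*((i:ℚ)+1)*((i:ℚ)-2*(n:ℚ)-1)*(2*(i:ℚ)-2*(n:ℚ)-1) * f'nik n i k
      + ((i:ℚ)-3*(n:ℚ)-2)*((i:ℚ)-(n:ℚ)+1)*((i:ℚ)+(n:ℚ)+2) * f'nik n (i+1) k
      = Pki n (k+1) i - Pki n k i := by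
  obtain ⟨m, hm⟩ : ∃ m, n = k + 1 + m := ⟨n - (k+1), by omega⟩
  obtain ⟨t, ht⟩ : ∃ t, 2*n = i + k + 1 + t := ⟨2*n - (i+k+1), by omega⟩
  obtain ⟨s, hs⟩ : ∃ s, 2*n = k + s := ⟨2*n - k, by omega⟩
  obtain ⟨r, hr⟩ : ∃ r, 3*n = k + r := ⟨3*n - k, by omega⟩
  have hc := catalan_step m
  have hmq : (n:ℚ) = k + 1 + m := by exact_mod_cast hm
  have htq : 2*(n:ℚ) = i + k + 1 + t := by exact_mod_cast ht
  have hsq : 2*(n:ℚ) = k + s := by exact_mod_cast hs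
  have hrq : 3*(n:ℚ) = k + r := by exact_mod_cast hr
  unfold f'nik Pki
  rw [show n - k = m + 1 by omega, show n - (k+1) = m by omega,
    show 2*n-k+1 = s+1 by omega, show 2*n-(k+1)+1 = s by omega,
    show 2*n-i-k = t+1 by omega, show 2*n-(i+1)-k = t by omega,
    show 2*n-i-(k+1) = t by omega, show 3*n-k+2 = r+1+1 by omega,
    show 3*n-(k+1)+2 = r+1 by omega, show n+(k+1)+1 = (n+k+1)+1 by omega,
    Nat.factorial_succ s, Nat.factorial_succ t, Nat.factorial_succ (r+1),
    Nat.factorial_succ (n+k+1), Nat.factorial_succ k]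
  have a1 := invFact_step ((n:ℤ)+i-2*k+1)
  have a2 := invFact_step ((n:ℤ)+i-2*k)
  have b1 := invFact_step ((n:ℤ)+k-2*i-1)
  have b2 := invFact_step ((n:ℤ)+k-2*i-2)
  rw [show (n:ℤ)+i-2*k+1+1 = (n:ℤ)+i+2-2*k by ring] at a1
  rw [show (n:ℤ)+k-2*i-1+1 = (n:ℤ)+k-2*i by ring] at b1
  rw [show (n:ℤ)+k-2*i-2+1 = (n:ℤ)+k-2*i-1 by ring, b1] at b2
  rw [a1] at a2
  push_cast at a1 a2 b1 b2 ⊢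
  rw [show (n:ℤ)+(i+1)-2*k+1 = (n:ℤ)+i+2-2*k by ring,
    show (n:ℤ)+k-2*(i+1) = (n:ℤ)+k-2*i-2 by ring,
    show (n:ℤ)+i+2-2*(k+1) = (n:ℤ)+i-2*k by ring,
    show (n:ℤ)+(k+1)-2*i-1 = (n:ℤ)+k-2*i by ring, a2, a1, b2, b1]
  generalize invFact ((n:ℤ)+i+2-2*k) = A
  generalize invFact ((n:ℤ)+k-2*i) = B
  have e1 : (k.factorial : ℚ) ≠ 0 := by positivity
  have e2 : ((r+1).factorial : ℚ) ≠ 0 := by positivity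
  have e3 : (k:ℚ)+1 ≠ 0 := by positivity
  have e4 : (r:ℚ)+1+1 ≠ 0 := by positivity
  have hcat : (catalan m : ℚ) * (2*m+1) = (m+2) * catalan (m+1) / 2 := by linear_combination -hc/2
  generalize (catalan m : ℚ) = c at *
  generalize (catalan (m+1) : ℚ) = d at *
  generalize (k.factorial : ℚ) = K at *
  generalize ((r+1).factorial : ℚ) = R at *
  generalize (s.factorial : ℚ) = S at *
  generalize (t.factorial : ℚ) = T at *
  generalize ((n+k+1).factorial : ℚ) = N at *
  have hm' : (m:ℚ) = n - k - 1 := by linarith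
  have ht' : (t:ℚ) = 2*n-i-k-1 := by linarith
  have hs' : (s:ℚ) = 2*n-k := by linarith
  have hr' : (r:ℚ) = 3*n-k := by linarith
  rw [hm'] at hcat
  rw [hr'] at e4
  rw [ht', hs', hr', pow_succ (-1:ℚ) (k+1)]
  generalize (-1:ℚ)^(k+1) = ε
  have key : 6*((k:ℚ)+1)*(i-n)*(2*n+1-2*(k+1))*(2*n+2-(k+1))*c
      = 6*((k:ℚ)+1)*(i-n)*(2*n+2-(k+1))*((n-k+1)*d/2) := by
    linear_combination 6*((k:ℚ)+1)*(i-n)*(2*n+2-(k+1))*hcat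
  rw [show ε * -1 * 6 * ((k:ℚ)+1)*(i-n)*(2*n+1-2*(k+1))*(2*n+2-(k+1))*c
      = ε * -1 * (6*((k:ℚ)+1)*(i-n)*(2*n+1-2*(k+1))*(2*n+2-(k+1))*c) by ring, key]
  rw [show 3*(n:ℚ)-k+1+1 = 3*n-k+2 by ring] at e4 ⊢
  obtain ⟨Q, hQ⟩ : ∃ Q : ℚ, 3*(n:ℚ)-k+2 = Q := ⟨_, rfl⟩
  rw [hQ] at e4 ⊢
  field_simp
  rw [← hQ]
  ring
end
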